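/- The diagonal Ramsey function dominates all provably total computable functions of PA: define D(n,m,k) as the least K ≥ max(n+2, m) such that K →_Δ (k)^{1+n}_m, and D(n) = D(n,n,2n). Then for every function f : ℕ → ℕ that is provably computable in PA, there exists n₀ such that f(x) < D(n₀, n₀, n₀ + x) for all x, and hence the function n ↦ D(n) eventually dominates f. -/

import Mathlib

open FirstOrder FirstOrder.Language

/-- Function symbols of the language of PA: `0, 1, +, ·, x^y`. -/
inductive ArithFunc : ℕ → Type
  | zero : ArithFunc 0
  | one : ArithFunc 0
  | add : ArithFunc 2
  | mul : ArithFunc 2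
  | exp : ArithFunc 2

/-- Relation symbols of the language of PA: `<` (equality is built in). -/
inductive ArithRel : ℕ → Type
  | lt : ArithRel 2

/-- The first-order language `{0, 1, +, ·, x^y, <, =}` of PA. -/
def LPA : FirstOrder.Language := ⟨ArithFunc, ArithRel⟩

/-- The standard model `ℕ`. -/
instance : LPA.Structure ℕ where
  funMap {n} f v :=
    match f with
    | ArithFunc.zero => 0
    | ArithFunc.one => 1
    | ArithFunc.add => v 0 + v 1
    | ArithFunc.mul => v 0 * v 1
    | ArithFunc.exp => v 0 ^ v 1
  RelMap {n} r v :=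
    match r with
    | ArithRel.lt => v 0 < v 1

section Model

variable {M : Type} [LPA.Structure M]

/-- Interpretation of `0`. -/
def pzero : M := Structure.funMap (L := LPA) ArithFunc.zero ![]
/-- Interpretation of `1`. -/
def pone : M := Structure.funMap (L := LPA) ArithFunc.one ![]
/-- Interpretation of `+`. -/
def padd (a b : M) : M := Structure.funMap (L := LPA) ArithFunc.add ![a, b]
/-- Interpretation of `·`. -/
def pmul (a b : M) : M := Structure.funMap (L := LPA) ArithFunc.mul ![a, b]
/-- Interpretation of `x^y`. -/
def pexp (a b : M) : M := Structure.funMap (L := LPA) ArithFunc.exp ![a, b]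
/-- Interpretation of `<`. -/
def plt (a b : M) : Prop := Structure.RelMap (L := LPA) ArithRel.lt ![a, b]

end Model

/-- `M` is a model of PA: the basic (Π₁) axioms for the constants
`0, 1, +, ·, x^y, <` hold, together with the induction scheme for all
first-order `LPA`-formulas (with parameters). -/
def IsPAModel (M : Type) [LPA.Structure M] : Prop :=
  (∀ a : M, padd a pzero = a) ∧
  (∀ a b : M, padd a b = padd b a) ∧
  (∀ a b c : M, padd (padd a b) c = padd a (padd b c)) ∧
  (∀ a : M, pmul a pzero = pzero) ∧
  (∀ a : M, pmul a pone = a) ∧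
  (∀ a b : M, pmul a b = pmul b a) ∧
  (∀ a b c : M, pmul (pmul a b) c = pmul a (pmul b c)) ∧
  (∀ a b c : M, pmul a (padd b c) = padd (pmul a b) (pmul a c)) ∧
  (∀ a : M, ¬ plt a a) ∧
  (∀ a b c : M, plt a b → plt b c → plt a c) ∧
  (∀ a b : M, plt a b ∨ a = b ∨ plt b a) ∧
  (∀ a b c : M, plt a b → plt (padd a c) (padd b c)) ∧
  (∀ a : M, a = pzero ∨ plt pzero a) ∧
  (∀ a : M, plt a (padd a pone)) ∧
  (∀ a b : M, plt a b → (padd a pone = b ∨ plt (padd a pone) b)) ∧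
  (∀ a : M, pexp a pzero = pone) ∧
  (∀ a b : M, pexp a (padd b pone) = pmul (pexp a b) a) ∧
  (∀ (n : ℕ) (φ : LPA.BoundedFormula Empty (n + 1)) (v : Fin n → M),
    φ.Realize (fun e => e.elim) (Fin.snoc v pzero) →
    (∀ x : M, φ.Realize (fun e => e.elim) (Fin.snoc v x) →
      φ.Realize (fun e => e.elim) (Fin.snoc v (padd x pone))) →
    ∀ x : M, φ.Realize (fun e => e.elim) (Fin.snoc v x))

/-- `PA ⊢ σ`, rendered (equivalently, by the Gödel completeness theorem) as:
`σ` holds in every model of PA. -/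
def PAproves (σ : LPA.Sentence) : Prop :=
  ∀ (M : Type) (_ : LPA.Structure M), IsPAModel M → M ⊨ σ

/-- The bounded formula `t₁ < t₂`. -/
def ltBF {n : ℕ} (t₁ t₂ : LPA.Term (Empty ⊕ Fin n)) : LPA.BoundedFormula Empty n :=
  Relations.boundedFormula₂ ArithRel.lt t₁ t₂

/-- Lift a term in context `n` to context `n + 1`. -/
def liftT {n : ℕ} (t : LPA.Term (Empty ⊕ Fin n)) : LPA.Term (Empty ⊕ Fin (n + 1)) :=
  t.relabel (Sum.map id Fin.castSucc)

/-- The guard `x_n < t` on the last variable of context `n + 1`. -/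
def guardLt {n : ℕ} (t : LPA.Term (Empty ⊕ Fin n)) : LPA.BoundedFormula Empty (n + 1) :=
  ltBF (Term.var (Sum.inr (Fin.last n))) (liftT t)

/-- The class of `Δ₀` (bounded) formulas: atomic formulas, closed under `⊥`,
`→` (hence all propositional connectives) and bounded quantification
`∀ x < t` and `∃ x < t`. -/
inductive Delta0 : ∀ {n : ℕ}, LPA.BoundedFormula Empty n → Prop
  | falsum {n : ℕ} : Delta0 (n := n) BoundedFormula.falsum
  | equal {n : ℕ} (t₁ t₂ : LPA.Term (Empty ⊕ Fin n)) : Delta0 (Term.bdEqual t₁ t₂)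
  | lt {n : ℕ} (t₁ t₂ : LPA.Term (Empty ⊕ Fin n)) : Delta0 (ltBF t₁ t₂)
  | imp {n : ℕ} {φ ψ : LPA.BoundedFormula Empty n} :
      Delta0 φ → Delta0 ψ → Delta0 (φ.imp ψ)
  | bdAll {n : ℕ} (t : LPA.Term (Empty ⊕ Fin n)) {φ : LPA.BoundedFormula Empty (n + 1)} :
      Delta0 φ → Delta0 ((guardLt t).imp φ).all
  | bdEx {n : ℕ} (t : LPA.Term (Empty ⊕ Fin n)) {φ : LPA.BoundedFormula Empty (n + 1)} :
      Delta0 φ → Delta0 ((guardLt t).imp φ.not).all.not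

/-- `H` is *diagonal homogeneous* for a partition `P` of `(1+n)`-element sets:
for `x₀ ∈ H`, `a < x₀`, and `n`-element subsets `Y, Z ⊆ H` lying entirely above
`x₀`, the colors of `{a} ∪ Y` and `{a} ∪ Z` agree. -/
def DiagHom (n : ℕ) {c : ℕ} (P : Finset ℕ → Fin c) (H : Finset ℕ) : Prop :=
  ∀ x₀ ∈ H, ∀ a < x₀, ∀ Y Z : Finset ℕ, Y ⊆ H → Z ⊆ H →
    Y.card = n → Z.card = n → (∀ y ∈ Y, x₀ < y) → (∀ z ∈ Z, x₀ < z) →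
    P (insert a Y) = P (insert a Z)

/-- `K →_Δ (m)^{1+n}_c` : every `c`-coloring of the `(1+n)`-element subsets of
`{0,…,K−1}` admits a diagonal homogeneous set of size `m`. -/
def ArrowDiag (K m n c : ℕ) : Prop :=
  ∀ P : Finset ℕ → Fin c, ∃ H : Finset ℕ,
    H ⊆ Finset.range K ∧ H.card = m ∧ DiagHom n P H

/-- The diagonal Ramsey function: `D(n,m,k)` is the least
`K ≥ max(n+2, m)` with `K →_Δ (k)^{1+n}_m` (DH guarantees existence). -/
noncomputable def Dfun (n m k : ℕ) : ℕ :=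
  sInf {K : ℕ | max (n + 2) m ≤ K ∧ ArrowDiag K k n m}

theorem Ultrafilter.exists_eventually_eq {α β : Type*} [Finite β] (U : Ultrafilter α)
    (g : α → β) : ∃ b, ∀ᶠ x in U, g x = b := by
  have h : (⋃ b ∈ (Set.univ : Set β), {x | g x = b}) ∈ U := by
    have : (⋃ b ∈ (Set.univ : Set β), {x | g x = b}) = Set.univ := by
      ext x
      simp
    rw [this]
    exact Filter.univ_mem
  obtain ⟨b, -, hb⟩ := (U.finite_biUnion_mem_iff Set.finite_univ).1 h
  exact ⟨b, hb⟩

/-- Iterated limits, along the free ultrafilter on `ℕ`, of a finite colouring of finite sets. -/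
theorem exists_iterated_limit {m : ℕ} (P : Finset ℕ → Fin m) :
    ∃ c : ℕ → Finset ℕ → Fin m, c 0 = P ∧
      ∀ r S, ∀ᶠ x in Filter.hyperfilter ℕ, c r (insert x S) = c (r + 1) S := by
  choose lim hlim using fun (Q : Finset ℕ → Fin m) (S : Finset ℕ) =>
    (Filter.hyperfilter ℕ).exists_eventually_eq (fun x => Q (insert x S))
  exact ⟨fun r => lim^[r] P, rfl, fun r S => by
    simpa only [Function.iterate_succ_apply'] using hlim (lim^[r] P) S⟩

/-- The infinite diagonal homogeneity principle, in the form of finite sets of every size. -/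
theorem exists_diagHom (n : ℕ) {m : ℕ} (P : Finset ℕ → Fin m) (k : ℕ) :
    ∃ H : Finset ℕ, H.card = k ∧ DiagHom n P H := by
  obtain ⟨c, hc0, hc⟩ := exists_iterated_limit P
  suffices ∃ H : Finset ℕ, H.card = k ∧ ∀ x₀ ∈ H, ∀ a < x₀, ∀ Y ⊆ H, (∀ y ∈ Y, x₀ < y) →
      ∀ r, r + Y.card = n → c r (insert a Y) = c n {a} by
    obtain ⟨H, hk, hH⟩ := this
    refine ⟨H, hk, fun x₀ hx₀ a ha Y Z hY hZ hYn hZn hY' hZ' => ?_⟩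
    have h1 := hH x₀ hx₀ a ha Y hY hY' 0 (by omega)
    have h2 := hH x₀ hx₀ a ha Z hZ hZ' 0 (by omega)
    rw [hc0] at h1 h2
    rw [h1, h2]
  induction k with
  | zero => exact ⟨∅, rfl, by simp⟩
  | succ k ih =>
    obtain ⟨H, hk, hH⟩ := ih
    have h1 : ∀ᶠ x in Filter.hyperfilter ℕ, H.sup id < x :=
      (Filter.eventually_gt_atTop _).filter_mono Nat.hyperfilter_le_atTop
    have h2 : ∀ᶠ x in Filter.hyperfilter ℕ, ∀ r ∈ Finset.range n, ∀ a ∈ Finset.range (H.sup id),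
        ∀ Y ∈ H.powerset, c r (insert x (insert a Y)) = c (r + 1) (insert a Y) := by
      simp only [Filter.eventually_all_finset]
      exact fun r _ a _ Y _ => hc r _
    obtain ⟨x, hx, hx'⟩ := (h1.and h2).exists
    have hlt : ∀ y ∈ H, y < x := fun y hy => (Finset.le_sup (f := id) hy).trans_lt hx
    have hxH : x ∉ H := fun h => lt_irrefl _ (hlt x h)
    refine ⟨insert x H, by rw [Finset.card_insert_of_notMem hxH, hk], ?_⟩
    intro x₀ hx₀ a ha Y hY hY' r hr
    by_cases hxY : x ∈ Y
    · have hx₀H : x₀ ∈ H := (Finset.mem_insert.1 hx₀).resolve_left (hY' x hxY).ne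
      have hsub : Y.erase x ⊆ H := fun y hy =>
        (Finset.mem_insert.1 (hY (Finset.mem_of_mem_erase hy))).resolve_left
          (Finset.ne_of_mem_erase hy)
      have hcard := Finset.card_erase_add_one hxY
      have h3 := hx' r (Finset.mem_range.2 (by omega)) a
        (Finset.mem_range.2 (ha.trans_le (Finset.le_sup (f := id) hx₀H))) (Y.erase x)
        (Finset.mem_powerset.2 hsub)
      rw [Finset.insert_comm, Finset.insert_erase hxY] at h3
      rw [h3]
      exact hH x₀ hx₀H a ha _ hsub (fun y hy => hY' y (Finset.mem_of_mem_erase hy)) _ (by omega)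
    · have hsub : Y ⊆ H := fun y hy =>
        (Finset.mem_insert.1 (hY hy)).resolve_left (by rintro rfl; exact hxY hy)
      rcases Finset.mem_insert.1 hx₀ with rfl | hx₀H
      · have hY0 : Y = ∅ := Finset.eq_empty_of_forall_notMem fun y hy =>
          lt_asymm (hY' y hy) (hlt y (hsub hy))
        subst hY0
        simp only [Finset.card_empty, add_zero] at hr
        rw [hr, insert_empty_eq]
      · exact hH x₀ hx₀H a ha Y hsub hY' r hr

/-- The finite principle DH, by compactness. -/
theorem exists_arrowDiag (n m k B : ℕ) : ∃ K, B ≤ K ∧ ArrowDiag K k n m := by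
  by_contra! hcon
  simp only [ArrowDiag] at hcon
  push Not at hcon
  choose P hP using fun K => hcon (max B K) (le_max_left _ _)
  choose Q hQ using fun S : Finset ℕ =>
    (Filter.hyperfilter ℕ).exists_eventually_eq (fun K => P K S)
  obtain ⟨H, hk, hH⟩ := exists_diagHom n Q k
  have h1 : ∀ᶠ K in Filter.hyperfilter ℕ, H.sup id < K :=
    (Filter.eventually_gt_atTop _).filter_mono Nat.hyperfilter_le_atTop
  have h2 : ∀ᶠ K in Filter.hyperfilter ℕ, ∀ S ∈ (Finset.range (H.sup id + 1)).powerset,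
      P K S = Q S := by
    simp only [Filter.eventually_all_finset]
    exact fun S _ => hQ S
  obtain ⟨K, hK, hPQ⟩ := (h1.and h2).exists
  have hle : ∀ y ∈ H, y ≤ H.sup id := fun y hy => Finset.le_sup (f := id) hy
  refine hP K H (fun y hy => Finset.mem_range.2 (lt_max_of_lt_right ((hle y hy).trans_lt hK))) hk ?_
  intro x₀ hx₀ a ha Y Z hY hZ hYn hZn hY' hZ'
  have key : ∀ W ⊆ H, P K (insert a W) = Q (insert a W) := fun W hW => by
    refine hPQ _ (Finset.mem_powerset.2 fun y hy => Finset.mem_range.2 ?_)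
    rcases Finset.mem_insert.1 hy with rfl | hy
    · have := hle _ hx₀
      omega
    · have := hle _ (hW hy)
      omega
  rw [key Y hY, key Z hZ]
  exact hH x₀ hx₀ a ha Y Z hY hZ hYn hZn hY' hZ'

theorem dfun_spec (n m k : ℕ) :
    max (n + 2) m ≤ Dfun n m k ∧ ArrowDiag (Dfun n m k) k n m :=
  Nat.sInf_mem (exists_arrowDiag n m k (max (n + 2) m))

theorem dfun_le {n m k K : ℕ} (hK : max (n + 2) m ≤ K) (h : ArrowDiag K k n m) :
    Dfun n m k ≤ K :=
  Nat.sInf_le ⟨hK, h⟩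

/-- The first elements of `A ∪ W`, where `A` lies below `W`, are those of `A`. -/
theorem image_nth_union {A W : Finset ℕ} (h : ∀ a ∈ A, ∀ w ∈ W, a < w) :
    (Finset.range A.card).image (Nat.nth (· ∈ A ∪ W)) = A := by
  symm
  refine Finset.eq_of_subset_of_card_le (fun a ha => ?_)
    (Finset.card_image_le.trans (Finset.card_range _).le)
  refine Finset.mem_image.2 ⟨Nat.count (· ∈ A ∪ W) a, Finset.mem_range.2 ?_,
    Nat.nth_count (p := (· ∈ A ∪ W)) (Finset.mem_union_left _ ha)⟩
  rw [Nat.count_eq_card_filter_range]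
  refine Finset.card_lt_card (Finset.ssubset_iff_of_subset (fun y hy => ?_) |>.2
    ⟨a, ha, by simp⟩)
  simp only [Finset.mem_filter, Finset.mem_range, Finset.mem_union] at hy
  exact hy.2.resolve_right fun hw => lt_asymm hy.1 (h a ha y hw)

theorem exists_initial_segment {H : Finset ℕ} {r : ℕ} (hr : r ≤ H.card) :
    ∃ A ⊆ H, A.card = r ∧ ∀ a ∈ A, ∀ w ∈ H \ A, a < w := by
  induction r with
  | zero => exact ⟨∅, by simp⟩
  | succ r ih =>
    obtain ⟨A, hA, hc, hlt⟩ := ih (by omega)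
    have hne : (H \ A).Nonempty := by
      rw [← Finset.card_pos, Finset.card_sdiff_of_subset hA]
      omega
    have hmem := Finset.min'_mem _ hne
    refine ⟨insert ((H \ A).min' hne) A, ?_, ?_, ?_⟩
    · exact Finset.insert_subset (Finset.mem_sdiff.1 hmem).1 hA
    · rw [Finset.card_insert_of_notMem (Finset.mem_sdiff.1 hmem).2, hc]
    · intro a ha w hw
      simp only [Finset.mem_sdiff, Finset.mem_insert, not_or] at hw
      have hw' : w ∈ H \ A := Finset.mem_sdiff.2 ⟨hw.1, hw.2.2⟩
      rcases Finset.mem_insert.1 ha with rfl | ha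
      · exact lt_of_le_of_ne (Finset.min'_le _ _ hw') (Ne.symm hw.2.1)
      · exact hlt a ha w hw'

theorem dfun_mono {n₀ n k : ℕ} (h : n₀ ≤ n) (hk : n - n₀ ≤ k) :
    Dfun n₀ n₀ (k - (n - n₀)) ≤ Dfun n n k := by
  obtain ⟨hK, hA⟩ := dfun_spec n n k
  refine dfun_le (by omega) fun P => ?_
  obtain ⟨H, hHK, hHk, hH⟩ := hA fun S =>
    Fin.castLE h (P ((Finset.range (n₀ + 1)).image (Nat.nth (· ∈ S))))
  obtain ⟨A, hAH, hAc, hAlt⟩ := exists_initial_segment (H := H) (r := k - (n - n₀)) (by omega)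
  refine ⟨A, hAH.trans hHK, hAc, ?_⟩
  intro x₀ hx₀ a ha Y Z hY hZ hYn hZn hY' hZ'
  have hW : (H \ A).card = n - n₀ := by
    rw [Finset.card_sdiff_of_subset hAH]
    omega
  have key : ∀ V ⊆ A, V.card = n₀ → (∀ y ∈ V, x₀ < y) → V ∪ H \ A ⊆ H ∧
      (V ∪ H \ A).card = n ∧ (∀ y ∈ V ∪ H \ A, x₀ < y) ∧
      (Finset.range (n₀ + 1)).image (Nat.nth (· ∈ insert a (V ∪ H \ A))) = insert a V := by
    intro V hV hVn hV'
    refine ⟨Finset.union_subset (hV.trans hAH) Finset.sdiff_subset, ?_, ?_, ?_⟩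
    · rw [Finset.card_union_of_disjoint (Finset.disjoint_sdiff.mono_left hV)]
      omega
    · intro y hy
      rcases Finset.mem_union.1 hy with hy | hy
      · exact hV' y hy
      · exact hAlt x₀ hx₀ y hy
    · have haV : a ∉ V := fun hmem => lt_asymm ha (hV' a hmem)
      rw [← Finset.insert_union, ← hVn, ← Finset.card_insert_of_notMem haV]
      refine image_nth_union fun b hb w hw => ?_
      rcases Finset.mem_insert.1 hb with rfl | hb
      · exact ha.trans (hAlt x₀ hx₀ w hw)
      · exact hAlt b (hV hb) w hw
  obtain ⟨h1, h2, h3, h4⟩ := key Y hY hYn hY'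
  obtain ⟨h5, h6, h7, h8⟩ := key Z hZ hZn hZ'
  have := hH x₀ (hAH hx₀) a ha _ _ h1 h5 h2 h6 h3 h7
  simp only [h4, h8] at this
  exact Fin.castLE_injective h this

theorem nth_image_range {u : ℕ → ℕ} {N : ℕ} (hu : ∀ i j, i < j → j < N → u i < u j) {m : ℕ}
    (hm : m < N) : Nat.nth (· ∈ (Finset.range N).image u) m = u m := by
  have hmono : ∀ i j, i < N → j < N → u i < u j → i < j := by
    intro i j hi hj h
    by_contra! hle
    rcases hle.eq_or_lt with rfl | hlt
    · exact lt_irrefl _ h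
    · exact lt_asymm h (hu j i hlt hi)
  have hcount : Nat.count (· ∈ (Finset.range N).image u) (u m) = m := by
    rw [Nat.count_eq_card_filter_range]
    have : ((Finset.range (u m)).filter (· ∈ (Finset.range N).image u)) =
        (Finset.range m).image u := by
      ext y
      simp only [Finset.mem_filter, Finset.mem_range, Finset.mem_image]
      constructor
      · rintro ⟨h1, i, hi, rfl⟩
        exact ⟨i, hmono i m hi hm h1, rfl⟩
      · rintro ⟨i, hi, rfl⟩
        exact ⟨hu i m hi hm, i, hi.trans hm, rfl⟩
    rw [this, Finset.card_image_of_injOn, Finset.card_range]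
    intro i hi j hj hij
    simp only [Finset.coe_range, Set.mem_Iio] at hi hj
    by_contra hne
    rcases Nat.lt_or_gt_of_ne hne with h | h
    · exact (hu i j h (hj.trans hm)).ne hij
    · exact (hu j i h (hi.trans hm)).ne' hij
  have hmem : u m ∈ (Finset.range N).image u :=
    Finset.mem_image_of_mem u (Finset.mem_range.2 hm)
  have := Nat.nth_count (p := (· ∈ (Finset.range N).image u)) hmem
  rwa [hcount] at this

theorem exists_enumeration (H : Finset ℕ) :
    ∃ g : ℕ → ℕ, (∀ m < H.card, g m ∈ H) ∧ ∀ i j, i < j → j < H.card → g i < g j := by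
  refine ⟨fun m => if h : m < H.card then H.orderEmbOfFin rfl ⟨m, h⟩ else 0, ?_, ?_⟩
  · intro m hm
    simp only [hm, dif_pos]
    exact Finset.orderEmbOfFin_mem _ _ _
  · intro i j hij hj
    simp only [hj, hij.trans hj, dif_pos]
    exact (H.orderEmbOfFin rfl).strictMono hij

/-- Diagonal homogeneity for a colouring by the truth values of finitely many predicates. -/
theorem ArrowDiag.exists_indiscernible (R : ℕ → ℕ → (ℕ → ℕ) → Prop) (t : ℕ → ℕ)
    (hR : ∀ e a b b', (∀ m < t e, b m = b' m) → (R e a b ↔ R e a b')) {K n c : ℕ} (hn : 0 < n)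
    (hA : ArrowDiag K (n + c) n n) :
    ∃ g : ℕ → ℕ, (∀ m < n + c, g m < K) ∧ (∀ i j, i < j → j < n + c → g i < g j) ∧
      ∀ e, 2 ^ (e + 1) ≤ n → t e ≤ n → ∀ i j k, StrictMono j → StrictMono k →
        i < j 0 → i < k 0 → j (t e) ≤ c → k (t e) ≤ c → ∀ a < g i,
          (R e a (fun m => g (j m)) ↔ R e a (fun m => g (k m))) := by
  classical
  obtain ⟨ι⟩ : Nonempty ((Fin (Nat.log 2 n) → Bool) ↪ Fin n) := by
    apply Function.Embedding.nonempty_of_card_le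
    simpa using Nat.pow_log_le_self 2 hn.ne'
  obtain ⟨H, hHK, hHc, hH⟩ := hA fun S => ι fun e =>
    decide (R e (Nat.nth (· ∈ S) 0) (fun m => Nat.nth (· ∈ S) (m + 1)))
  obtain ⟨g, hgH, hg⟩ := exists_enumeration H
  rw [hHc] at hgH hg
  refine ⟨g, fun m hm => Finset.mem_range.1 (hHK (hgH m hm)), hg, ?_⟩
  intro e he hte i j k hj hk hij hik hjc hkc a ha
  have key : ∀ j : ℕ → ℕ, StrictMono j → i < j 0 → j (t e) ≤ c →
      ∃ Y ⊆ H, Y.card = n ∧ (∀ y ∈ Y, g i < y) ∧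
        (R e (Nat.nth (· ∈ insert a Y) 0) (fun m => Nat.nth (· ∈ insert a Y) (m + 1)) ↔
          R e a (fun m => g (j m))) := by
    intro j hj hij hjc
    let u : ℕ → ℕ := fun m => if m < t e then j m else j (t e) + (m - t e)
    have hu : StrictMono u := by
      refine strictMono_nat_of_lt_succ fun m => ?_
      simp only [u]
      split_ifs with h1 h2 h2
      · exact hj (Nat.lt_succ_self m)
      · have := hj h1
        omega
      · omega
      · omega
    have hiu : ∀ m, i < u m := fun m => by
      refine lt_of_lt_of_le ?_ (hu.monotone (Nat.zero_le m))
      simp only [u]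
      split_ifs with h
      · exact hij
      · rw [Nat.eq_zero_of_not_pos h]
        omega
    have hun : ∀ m < n, u m < n + c := fun m hm => by
      simp only [u]
      split_ifs with h
      · have := hj h
        omega
      · omega
    let w : ℕ → ℕ := fun m => Nat.casesOn m a fun m => g (u m)
    have hw : ∀ p q, p < q → q < n + 1 → w p < w q := by
      intro p q hpq hq
      obtain ⟨q, rfl⟩ := Nat.exists_eq_succ_of_ne_zero (Nat.ne_zero_of_lt hpq)
      cases p with
      | zero => exact ha.trans (hg _ _ (hiu q) (hun q (by omega)))
      | succ p => exact hg _ _ (hu (by omega)) (hun q (by omega))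
    have hins : insert a ((Finset.range n).image fun m => g (u m)) =
        (Finset.range (n + 1)).image w := by
      rw [Finset.range_add_one', Finset.image_insert, Finset.map_eq_image, Finset.image_image]
      rfl
    refine ⟨(Finset.range n).image fun m => g (u m), ?_, ?_, ?_, ?_⟩
    · intro y hy
      obtain ⟨m, hm, rfl⟩ := Finset.mem_image.1 hy
      exact hgH _ (hun m (Finset.mem_range.1 hm))
    · rw [Finset.card_image_of_injOn, Finset.card_range]
      intro p hp q hq hpq
      simp only [Finset.coe_range, Set.mem_Iio] at hp hq
      by_contra hne
      rcases Nat.lt_or_gt_of_ne hne with h | h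
      · exact (hg _ _ (hu h) (hun q hq)).ne hpq
      · exact (hg _ _ (hu h) (hun p hp)).ne' hpq
    · intro y hy
      obtain ⟨m, hm, rfl⟩ := Finset.mem_image.1 hy
      exact hg _ _ (hiu m) (hun m (Finset.mem_range.1 hm))
    · rw [hins, nth_image_range hw (Nat.succ_pos n)]
      refine hR e a _ _ fun m hm => ?_
      rw [nth_image_range hw (by omega)]
      simp only [w, u, if_pos hm]
  obtain ⟨Y, hYH, hYn, hY, hRY⟩ := key j hj hij hjc
  obtain ⟨Z, hZH, hZn, hZ, hRZ⟩ := key k hk hik hkc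
  have hi : i < n + c := by
    have := hj.monotone (Nat.zero_le (t e))
    omega
  have := ι.injective (hH (g i) (hgH i hi) a ha Y Z hYH hZH hYn hZn hY hZ)
  have := congrFun this ⟨e, Nat.le_log_of_pow_le one_lt_two he⟩
  rw [← hRY, ← hRZ]
  exact decide_eq_decide.1 this

/-- A sequence of functions whose tail tuples have, modulo an ultrafilter, the same `R`-type over
parameters below. -/
def Indisc (U : Ultrafilter ℕ) (h : ℕ → ℕ → ℕ) (R : ℕ → (ℕ → ℕ) → Prop) : Prop :=
  ∀ (i : ℕ) (j k : ℕ → ℕ), StrictMono j → StrictMono k → i < j 0 → i < k 0 →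
    ∀ᶠ n in U, ∀ a < h i n, (R a (fun m => h (j m) n) ↔ R a (fun m => h (k m) n))

theorem exists_indisc {ε : Type*} [Countable ε] [Nonempty ε] (R : ε → ℕ → (ℕ → ℕ) → Prop)
    (t : ε → ℕ) (hR : ∀ e a b b', (∀ m < t e, b m = b' m) → (R e a b ↔ R e a b')) (K c : ℕ → ℕ)
    (hc : Filter.Tendsto c Filter.atTop Filter.atTop)
    (hA : ∀ n, ArrowDiag (K n) (n + c n) n n) :
    ∃ h : ℕ → ℕ → ℕ, (∀ e, Indisc (Filter.hyperfilter ℕ) h (R e)) ∧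
      (∀ i j, i < j → ∀ᶠ n in Filter.hyperfilter ℕ, h i n < h j n) ∧
      (∀ i, ∀ᶠ n in Filter.hyperfilter ℕ, h i n < K n) ∧
      ∀ᶠ n in Filter.hyperfilter ℕ, c n ≤ 2 * h 0 n := by
  obtain ⟨q, hq⟩ := exists_surjective_nat ε
  choose! g hgK hg hgR using fun (n : ℕ) (hn : 0 < n) =>
    (hA n).exists_indiscernible (fun e => R (q e)) (fun e => t (q e)) (fun e => hR (q e)) hn
  have hpos : ∀ᶠ n in Filter.hyperfilter ℕ, 0 < n :=
    (Filter.eventually_gt_atTop 0).filter_mono Nat.hyperfilter_le_atTop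
  have hn : ∀ B, ∀ᶠ n in Filter.hyperfilter ℕ, B ≤ n := fun B =>
    (Filter.eventually_ge_atTop B).filter_mono Nat.hyperfilter_le_atTop
  have hcB : ∀ B, ∀ᶠ n in Filter.hyperfilter ℕ, B ≤ c n := fun B =>
    (hc.eventually_ge_atTop B).filter_mono Nat.hyperfilter_le_atTop
  refine ⟨fun i n => g n (i + (c n + 1) / 2), ?_, ?_, ?_, ?_⟩
  · intro e i j k hj hk hij hik
    obtain ⟨e, rfl⟩ := hq e
    filter_upwards [hpos, hn (2 ^ (e + 1)), hn (t (q e)), hcB (2 * j (t (q e)) + 2),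
      hcB (2 * k (t (q e)) + 2)] with n h0 h1 h2 h3 h4
    exact hgR n h0 e h1 h2 _ (fun m => j m + (c n + 1) / 2) (fun m => k m + (c n + 1) / 2)
      (hj.add_const _) (hk.add_const _) (by omega) (by omega) (by omega) (by omega)
  · intro i j hij
    filter_upwards [hpos, hcB (2 * j + 2)] with n h0 h1
    exact hg n h0 _ _ (by omega) (by omega)
  · intro i
    filter_upwards [hpos, hcB (2 * i + 2)] with n h0 h1
    exact hgK n h0 _ (by omega)
  · filter_upwards [hpos] with n h0
    have hle : ∀ m, m < n + c n → m ≤ g n m := by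
      intro m
      induction m with
      | zero => exact fun _ => Nat.zero_le _
      | succ m ih =>
        intro hm
        have h1 := ih (by omega)
        have h2 := hg n h0 m (m + 1) (by omega) hm
        omega
    have := hle (0 + (c n + 1) / 2) (by omega)
    omega

section Growth

variable {U : Ultrafilter ℕ} {h : ℕ → ℕ → ℕ}

theorem Indisc.pair {Q : ℕ → ℕ → ℕ → Prop} (hQ : Indisc U h fun a b => Q a (b 0) (b 1))
    {i j k j' k' : ℕ} (hij : i < j) (hjk : j < k) (hij' : i < j') (hjk' : j' < k') :
    ∀ᶠ n in U, ∀ a < h i n, (Q a (h j n) (h k n) ↔ Q a (h j' n) (h k' n)) := by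
  have hs : ∀ j k : ℕ, j < k → StrictMono fun m => if m = 0 then j else k + m - 1 := by
    intro j k hjk
    refine strictMono_nat_of_lt_succ fun m => ?_
    simp only [Nat.add_eq_zero_iff, one_ne_zero, and_false, if_false]
    split_ifs <;> omega
  simpa using hQ i _ _ (hs j k hjk) (hs j' k' hjk') (by simpa using hij) (by simpa using hij')

theorem Indisc.add_le (hmono : ∀ i j, i < j → ∀ᶠ n in U, h i n < h j n)
    (hQ : Indisc U h fun a b => b 1 = b 0 + a) {i j k : ℕ} (hij : i < j)
    (hjk : j < k) : ∀ᶠ n in U, h i n + h j n ≤ h k n := by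
  filter_upwards [hQ.pair (Q := fun a x y => y = x + a) hij hjk hij (hjk.trans (lt_add_one k)),
    hmono j k hjk, hmono k (k + 1) (lt_add_one k)] with n h1 h2 h3
  by_contra! hlt
  have := (h1 (h k n - h j n) (by omega)).1 (by omega)
  omega

theorem Indisc.mul_le (hmono : ∀ i j, i < j → ∀ᶠ n in U, h i n < h j n)
    (hS : Indisc U h fun a b => b 1 = b 0 + a)
    (hQ : Indisc U h fun a b => b 1 / b 0 = a) {i j k : ℕ} (hij : i < j)
    (hjk : j < k) : ∀ᶠ n in U, h i n * h j n ≤ h k n := by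
  have hp : ∀ p q : ℕ, i < p → p < q → _ := fun p q hip hpq =>
    hQ.pair (Q := fun a x y => y / x = a) hij hjk hip hpq
  filter_upwards [hp (i + 1) (i + 3) (by omega) (by omega),
    hp (i + 1) (i + 5) (by omega) (by omega),
    hp (i + 3) (i + 5) (by omega) (by omega), hmono i (i + 1) (by omega), hmono i j hij,
    hS.add_le hmono (i := i + 1) (j := i + 2) (k := i + 3) (by omega) (by omega),
    hmono (i + 1) (i + 2) (by omega)] with n h1 h2 h3 h4 h5 h6 h7
  by_contra! hlt
  have ha : h k n / h j n < h i n := (Nat.div_lt_iff_lt_mul (by omega)).2 hlt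
  have e1 := (h1 _ ha).1 rfl
  have e2 := (h2 _ ha).1 rfl
  have e3 := (h3 _ ha).1 rfl
  generalize h k n / h j n = a at ha e1 e2 e3
  have ha2 : 2 ≤ a := by
    rw [← e1, Nat.le_div_iff_mul_le (by omega)]
    omega
  have m1 : a * h (i + 1) n ≤ h (i + 3) n := by
    rw [← Nat.le_div_iff_mul_le (by omega), e1]
  have m2 : a * h (i + 3) n ≤ h (i + 5) n := by
    rw [← Nat.le_div_iff_mul_le (by omega), e3]
  have m3 : a * a ≤ a := by
    conv_rhs => rw [← e2]
    rw [Nat.le_div_iff_mul_le (by omega), mul_assoc]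
    exact (Nat.mul_le_mul_left a m1).trans m2
  nlinarith

theorem Indisc.pow_le (hmono : ∀ i j, i < j → ∀ᶠ n in U, h i n < h j n)
    (hS : Indisc U h fun a b => b 1 = b 0 + a)
    (hD : Indisc U h fun a b => b 1 / b 0 = a)
    (hQ : Indisc U h fun a b => Nat.log (b 0) (b 1) = a) {i j k : ℕ} (hi : ∀ᶠ n in U, 1 ≤ h i n)
    (hij : i < j) (hjk : j < k) : ∀ᶠ n in U, h j n ^ h i n ≤ h k n := by
  have hp : ∀ p q : ℕ, i < p → p < q → _ := fun p q hip hpq =>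
    hQ.pair (Q := fun a x y => Nat.log x y = a) hij hjk hip hpq
  filter_upwards [hp (i + 1) (i + 3) (by omega) (by omega),
    hp (i + 1) (i + 5) (by omega) (by omega),
    hp (i + 3) (i + 5) (by omega) (by omega), hmono i (i + 1) (by omega), hmono i j hij,
    hmono j k hjk, hS.mul_le hmono hD (i := i + 1) (j := i + 2) (k := i + 3) (by omega) (by omega),
    hmono (i + 1) (i + 2) (by omega), hmono (i + 2) (i + 3) (by omega),
    hmono (i + 3) (i + 5) (by omega), hi] with n h1 h2 h3 h4 h5 h6 h7 h8 h9 h10 hi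
  by_contra! hlt
  have ha : Nat.log (h j n) (h k n) < h i n := Nat.log_lt_of_lt_pow (by omega) hlt
  have e1 := (h1 _ ha).1 rfl
  have e2 := (h2 _ ha).1 rfl
  have e3 := (h3 _ ha).1 rfl
  generalize Nat.log (h j n) (h k n) = a at ha e1 e2 e3
  have ha2 : 2 ≤ a := by
    rw [← e1]
    refine Nat.le_log_of_pow_le (by omega) ?_
    nlinarith
  have m1 : h (i + 1) n ^ a ≤ h (i + 3) n := by
    rw [← e1]
    exact Nat.pow_log_le_self _ (by omega)
  have m2 : h (i + 3) n ^ a ≤ h (i + 5) n := by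
    rw [← e3]
    exact Nat.pow_log_le_self _ (by omega)
  have m3 : a * a ≤ a := by
    conv_rhs => rw [← e2]
    refine Nat.le_log_of_pow_le (by omega) ?_
    rw [pow_mul]
    exact (Nat.pow_le_pow_left m1 a).trans m2
  nlinarith

end Growth

/-- A sequence of functions `ℕ → ℕ`, increasing modulo an ultrafilter and closed under
exponentiation: its elements are cofinal in a cut of the ultrapower of `ℕ`. -/
structure Scale where
  U : Ultrafilter ℕ
  h : ℕ → ℕ → ℕ
  mono : ∀ i j, i < j → ∀ᶠ n in U, h i n < h j n
  two_le : ∀ᶠ n in U, 2 ≤ h 0 n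
  pow_le : ∀ i, ∃ j, ∀ᶠ n in U, h i n ^ h i n ≤ h j n

namespace Scale

variable (S : Scale)

theorem mono_le {i j : ℕ} (hij : i ≤ j) : ∀ᶠ n in S.U, S.h i n ≤ S.h j n := by
  rcases hij.eq_or_lt with rfl | hlt
  · exact Filter.Eventually.of_forall fun _ => le_rfl
  · exact (S.mono i j hlt).mono fun _ => le_of_lt

/-- The functions representing an element of the cut. -/
def InCut (s : ℕ → ℕ) : Prop := ∃ i, ∀ᶠ n in S.U, s n < S.h i n

variable {S}

theorem InCut.of_le {s t : ℕ → ℕ} (ht : S.InCut t) (hst : ∀ᶠ n in S.U, s n ≤ t n) :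
    S.InCut s := by
  obtain ⟨i, hi⟩ := ht
  exact ⟨i, by filter_upwards [hi, hst] with n h1 h2 using h2.trans_lt h1⟩

theorem InCut.of_le_pow {r s t : ℕ → ℕ} (hs : S.InCut s) (ht : S.InCut t)
    (hr : ∀ n x, s n < x → t n < x → 2 ≤ x → r n ≤ x ^ x) : S.InCut r := by
  obtain ⟨i, hi⟩ := hs
  obtain ⟨j, hj⟩ := ht
  obtain ⟨k, hk⟩ := S.pow_le (max i j)
  refine ⟨k + 1, ?_⟩
  filter_upwards [hi, hj, hk, S.mono k (k + 1) (lt_add_one k), S.two_le,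
    S.mono_le (Nat.zero_le (max i j)), S.mono_le (le_max_left i j),
    S.mono_le (le_max_right i j)] with n h1 h2 h3 h4 h5 h6 h7 h8
  exact ((hr n _ (h1.trans_le h7) (h2.trans_le h8) (h5.trans h6)).trans h3).trans_lt h4

theorem InCut.add {s t : ℕ → ℕ} (hs : S.InCut s) (ht : S.InCut t) :
    S.InCut fun n => s n + t n :=
  hs.of_le_pow ht fun n x h1 h2 h3 =>
    (by nlinarith : s n + t n ≤ x ^ 2).trans (Nat.pow_le_pow_right (by omega) h3)

theorem InCut.mul {s t : ℕ → ℕ} (hs : S.InCut s) (ht : S.InCut t) :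
    S.InCut fun n => s n * t n :=
  hs.of_le_pow ht fun n x h1 h2 h3 =>
    (by nlinarith : s n * t n ≤ x ^ 2).trans (Nat.pow_le_pow_right (by omega) h3)

theorem InCut.pow {s t : ℕ → ℕ} (hs : S.InCut s) (ht : S.InCut t) :
    S.InCut fun n => s n ^ t n :=
  hs.of_le_pow ht fun n x h1 h2 h3 =>
    (Nat.pow_le_pow_left h1.le _).trans (Nat.pow_le_pow_right (by omega) h2.le)

theorem InCut.pair {s t : ℕ → ℕ} (hs : S.InCut s) (ht : S.InCut t) :
    S.InCut fun n => Nat.pair (s n) (t n) :=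
  hs.of_le_pow ht fun n x h1 h2 h3 => by
    have h4 : max (s n) (t n) + 1 ≤ x := max_lt h1 h2
    exact (Nat.pair_lt_max_add_one_sq _ _).le.trans
      ((Nat.pow_le_pow_left h4 2).trans (Nat.pow_le_pow_right (by omega) h3))

theorem inCut_one : S.InCut fun _ => 1 := ⟨0, S.two_le⟩

theorem inCut_zero : S.InCut fun _ => 0 :=
  inCut_one.of_le (Filter.Eventually.of_forall fun _ => zero_le_one)

theorem inCut_funMap {l : ℕ} (f : LPA.Functions l) (s : Fin l → ℕ → ℕ) (hs : ∀ k, S.InCut (s k)) :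
    S.InCut fun n => Structure.funMap f fun k => s k n := by
  cases f with
  | zero => exact inCut_zero
  | one => exact inCut_one
  | add => exact (hs 0).add (hs 1)
  | mul => exact (hs 0).mul (hs 1)
  | exp => exact (hs 0).pow (hs 1)

variable (S)

/-- Equality modulo the ultrafilter. -/
def setoid : Setoid {s : ℕ → ℕ // S.InCut s} where
  r s t := ∀ᶠ n in S.U, s.1 n = t.1 n
  iseqv := ⟨fun _ => Filter.Eventually.of_forall fun _ => rfl,
    fun h => h.mono fun _ => Eq.symm,
    fun h h' => by filter_upwards [h, h'] with n h1 h2 using h1.trans h2⟩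

/-- The cut of the ultrapower of `ℕ` determined by a scale. -/
def Cut : Type := Quotient S.setoid

variable {S}

/-- The element of the cut represented by a function. -/
def ofFun (s : ℕ → ℕ) (hs : S.InCut s) : S.Cut := Quotient.mk S.setoid ⟨s, hs⟩

/-- A function representing an element of the cut. -/
noncomputable def rep (x : S.Cut) : ℕ → ℕ := (Quotient.out x).1

theorem inCut_rep (x : S.Cut) : S.InCut (rep x) := (Quotient.out x).2

theorem ofFun_rep (x : S.Cut) : ofFun (rep x) (inCut_rep x) = x := Quotient.out_eq x

theorem ofFun_eq_ofFun {s t : ℕ → ℕ} {hs : S.InCut s} {ht : S.InCut t} :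
    ofFun s hs = ofFun t ht ↔ ∀ᶠ n in S.U, s n = t n :=
  Quotient.eq (r := S.setoid)

theorem eq_iff {x y : S.Cut} : x = y ↔ ∀ᶠ n in S.U, rep x n = rep y n := by
  rw [← ofFun_eq_ofFun (hs := inCut_rep x) (ht := inCut_rep y), ofFun_rep, ofFun_rep]

theorem rep_ofFun (s : ℕ → ℕ) (hs : S.InCut s) : ∀ᶠ n in S.U, rep (ofFun s hs) n = s n := by
  rw [← ofFun_eq_ofFun (hs := inCut_rep _) (ht := hs), ofFun_rep]

noncomputable instance : LPA.Structure S.Cut where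
  funMap f v := ofFun (fun n => Structure.funMap f fun k => rep (v k) n)
    (inCut_funMap f _ fun k => inCut_rep (v k))
  RelMap r v := ∀ᶠ n in S.U, Structure.RelMap r fun k => rep (v k) n

theorem rep_realize {α : Type*} (t : LPA.Term α) (v : α → S.Cut) :
    ∀ᶠ n in S.U, rep (t.realize v) n = t.realize fun a => rep (v a) n := by
  induction t with
  | var a => exact Filter.Eventually.of_forall fun _ => rfl
  | func f ts ih =>
    filter_upwards [rep_ofFun _ (inCut_funMap f _ fun k => inCut_rep ((ts k).realize v)),
      Filter.eventually_all.2 ih] with n h1 h2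
    refine h1.trans ?_
    simp only [Term.realize, h2]

theorem rep_realize_elim {l : ℕ} (t : LPA.Term (Empty ⊕ Fin l)) (v : Fin l → S.Cut) :
    ∀ᶠ n in S.U, rep (t.realize (Sum.elim (fun e => e.elim) v)) n =
      t.realize (Sum.elim (fun e => e.elim) fun k => rep (v k) n) := by
  filter_upwards [rep_realize t (Sum.elim (fun e => e.elim) v)] with n hn
  rw [hn]
  congr 1
  funext a
  rcases a with a | a
  · exact a.elim
  · rfl

theorem realize_equal_iff {l : ℕ} (t₁ t₂ : LPA.Term (Empty ⊕ Fin l)) (v : Fin l → S.Cut) :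
    (BoundedFormula.equal t₁ t₂).Realize (fun e => e.elim) v ↔
      ∀ᶠ n in S.U, (BoundedFormula.equal t₁ t₂).Realize (fun e => e.elim)
        fun k => rep (v k) n := by
  simp only [BoundedFormula.Realize]
  rw [eq_iff]
  refine Filter.eventually_congr ?_
  filter_upwards [rep_realize_elim t₁ v, rep_realize_elim t₂ v] with n h1 h2
  rw [h1, h2]

theorem realize_rel_iff {l q : ℕ} (r : LPA.Relations q) (ts : Fin q → LPA.Term (Empty ⊕ Fin l))
    (v : Fin l → S.Cut) :
    (BoundedFormula.rel r ts).Realize (fun e => e.elim) v ↔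
      ∀ᶠ n in S.U, (BoundedFormula.rel r ts).Realize (fun e => e.elim)
        fun k => rep (v k) n := by
  refine Filter.eventually_congr (Filter.Eventually.mono
    (Filter.eventually_all.2 fun k => rep_realize_elim (ts k) v) fun n hn => ?_)
  simp only [BoundedFormula.Realize, hn]

theorem padd_ofFun {s t : ℕ → ℕ} (hs : S.InCut s) (ht : S.InCut t) :
    padd (ofFun s hs) (ofFun t ht) = ofFun (fun n => s n + t n) (hs.add ht) := by
  refine ofFun_eq_ofFun.2 ?_
  filter_upwards [rep_ofFun s hs, rep_ofFun t ht] with n h1 h2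
  exact congrArg₂ (· + ·) h1 h2

theorem pmul_ofFun {s t : ℕ → ℕ} (hs : S.InCut s) (ht : S.InCut t) :
    pmul (ofFun s hs) (ofFun t ht) = ofFun (fun n => s n * t n) (hs.mul ht) := by
  refine ofFun_eq_ofFun.2 ?_
  filter_upwards [rep_ofFun s hs, rep_ofFun t ht] with n h1 h2
  exact congrArg₂ (· * ·) h1 h2

theorem pexp_ofFun {s t : ℕ → ℕ} (hs : S.InCut s) (ht : S.InCut t) :
    pexp (ofFun s hs) (ofFun t ht) = ofFun (fun n => s n ^ t n) (hs.pow ht) := by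
  refine ofFun_eq_ofFun.2 ?_
  filter_upwards [rep_ofFun s hs, rep_ofFun t ht] with n h1 h2
  exact congrArg₂ (· ^ ·) h1 h2

theorem pzero_eq : (pzero : S.Cut) = ofFun (fun _ => 0) inCut_zero := rfl

theorem pone_eq : (pone : S.Cut) = ofFun (fun _ => 1) inCut_one := rfl

theorem plt_iff {x y : S.Cut} : plt x y ↔ ∀ᶠ n in S.U, rep x n < rep y n := Iff.rfl

theorem plt_ofFun {s t : ℕ → ℕ} (hs : S.InCut s) (ht : S.InCut t) :
    plt (ofFun s hs) (ofFun t ht) ↔ ∀ᶠ n in S.U, s n < t n := by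
  rw [plt_iff]
  refine Filter.eventually_congr ?_
  filter_upwards [rep_ofFun s hs, rep_ofFun t ht] with n h1 h2
  rw [h1, h2]

theorem forall_ofFun {p : S.Cut → Prop} : (∀ x, p x) ↔ ∀ s (hs : S.InCut s), p (ofFun s hs) :=
  ⟨fun h _ _ => h _, fun h x => ofFun_rep x ▸ h _ _⟩

theorem rep_snoc {l : ℕ} (v : Fin l → S.Cut) (x : S.Cut) (n : ℕ) :
    (fun k => rep (Fin.snoc (α := fun _ => S.Cut) v x k) n) =
      Fin.snoc (α := fun _ => ℕ) (fun k => rep (v k) n) (rep x n) := by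
  funext k
  refine Fin.lastCases ?_ (fun k => ?_) k <;> simp

end Scale

theorem realize_guardLt_imp_all {M : Type} [LPA.Structure M] {l : ℕ}
    (t : LPA.Term (Empty ⊕ Fin l)) (φ : LPA.BoundedFormula Empty (l + 1)) (v : Fin l → M) :
    ((guardLt t).imp φ).all.Realize (fun e => e.elim) v ↔
      ∀ x, plt x (t.realize (Sum.elim (fun e => e.elim) v)) →
        φ.Realize (fun e => e.elim) (Fin.snoc v x) := by
  have hlift : ∀ x : M, (liftT t).realize (Sum.elim (fun e => e.elim) (Fin.snoc v x)) =
      t.realize (Sum.elim (fun e : Empty => e.elim) v) := fun x => by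
    rw [liftT, Term.realize_relabel]
    congr 1
    funext a
    rcases a with a | a
    · exact a.elim
    · simp
  simp only [BoundedFormula.realize_all, BoundedFormula.realize_imp, guardLt, ltBF]
  refine forall_congr' fun x => imp_congr_left ?_
  refine (BoundedFormula.realize_rel₂ (L := LPA) (R := ArithRel.lt)).trans ?_
  rw [hlift, Term.realize_var, Sum.elim_inr, Fin.snoc_last]
  rfl

namespace Scale

variable {S : Scale}

theorem forall_plt_iff (t : S.Cut) (p : ℕ → ℕ → Prop) :
    (∀ x, plt x t → ∀ᶠ n in S.U, p n (rep x n)) ↔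
      ∀ᶠ n in S.U, ∀ y < rep t n, p n y := by
  constructor
  · intro h
    by_contra hcon
    rw [← Ultrafilter.eventually_not] at hcon
    push Not at hcon
    obtain ⟨y, hy⟩ := Filter.Eventually.choice hcon
    have hyt : S.InCut y := (inCut_rep t).of_le (hy.mono fun n hn => hn.1.le)
    have h1 := h (ofFun y hyt) (plt_iff.2 (by
      filter_upwards [hy, rep_ofFun y hyt] with n h1 h2
      rw [h2]
      exact h1.1))
    obtain ⟨n, h2, h3, h4⟩ := (h1.and (hy.and (rep_ofFun y hyt))).exists
    exact h3.2 (h4 ▸ h2)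
  · intro h x hx
    filter_upwards [h, plt_iff.1 hx] with n h1 h2 using h1 _ h2

/-- Bounded formulas are absolute between the cut and the ultrapower. -/
theorem realize_delta0_iff {l : ℕ} {φ : LPA.BoundedFormula Empty l} (hφ : Delta0 φ)
    (v : Fin l → S.Cut) :
    φ.Realize (fun e => e.elim) v ↔
      ∀ᶠ n in S.U, φ.Realize (fun e => e.elim) fun k => rep (v k) n := by
  have hall : ∀ {l : ℕ} (t : LPA.Term (Empty ⊕ Fin l)) (φ : LPA.BoundedFormula Empty (l + 1)),
      (∀ v : Fin (l + 1) → S.Cut, φ.Realize (fun e => e.elim) v ↔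
        ∀ᶠ n in S.U, φ.Realize (fun e => e.elim) fun k => rep (v k) n) →
      ∀ v : Fin l → S.Cut, ((guardLt t).imp φ).all.Realize (fun e => e.elim) v ↔
        ∀ᶠ n in S.U, ((guardLt t).imp φ).all.Realize (fun e => e.elim) fun k => rep (v k) n := by
    intro l t φ ih v
    simp only [realize_guardLt_imp_all, ih, rep_snoc]
    rw [forall_plt_iff _ fun n y => φ.Realize (fun e => e.elim)
      (Fin.snoc (fun k => rep (v k) n) y)]
    refine Filter.eventually_congr ((rep_realize_elim t v).mono fun n hn => ?_)
    rw [hn]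
    rfl
  induction hφ with
  | falsum => exact (Filter.eventually_const (f := (S.U : Filter ℕ))).symm
  | equal t₁ t₂ => exact realize_equal_iff t₁ t₂ v
  | lt t₁ t₂ => exact realize_rel_iff _ _ v
  | imp _ _ ih₁ ih₂ =>
    simp only [BoundedFormula.realize_imp, Ultrafilter.eventually_imp, ih₁, ih₂]
  | bdAll t _ ih => exact hall t _ ih v
  | bdEx t _ ih =>
    simp only [BoundedFormula.realize_not, Ultrafilter.eventually_not]
    refine not_congr (hall t _ (fun v => ?_) v)
    simp only [BoundedFormula.realize_not, Ultrafilter.eventually_not, ih]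

end Scale

instance (l : ℕ) : Countable (LPA.Functions l) := by
  let code : ArithFunc l → ℕ := fun f => match f with
    | .zero => 0
    | .one => 1
    | .add => 2
    | .mul => 3
    | .exp => 4
  refine Function.Injective.countable (f := code) fun a b hab => ?_
  cases a <;> cases b <;> first | rfl | (simp [code] at hab)

instance (l : ℕ) : Countable (LPA.Relations l) :=
  Function.Injective.countable (f := fun _ : ArithRel l => 0) fun a b _ => by
    cases a
    cases b
    rfl

instance : Countable LPA.Symbols :=
  inferInstanceAs (Countable ((Σ l, LPA.Functions l) ⊕ Σ l, LPA.Relations l))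

/-- The tuple of length `l` coded by a number through iterated pairing. -/
def env : ∀ l : ℕ, ℕ → Fin l → ℕ
  | 0, _ => Fin.elim0
  | l + 1, a => Fin.snoc (α := fun _ => ℕ) (env l a.unpair.1) a.unpair.2

theorem env_pair (l a x : ℕ) :
    env (l + 1) (Nat.pair a x) = Fin.snoc (α := fun _ => ℕ) (env l a) x := by
  simp [env]

/-- Truth in `ℕ` of the formula in which the successively nested quantifiers are restricted by
`b 0, b 1, …`; the number `a` codes the assignment, and the bounds apply to such codes. -/
def boundedTruth : ∀ {l : ℕ}, LPA.BoundedFormula Empty l → ℕ → (ℕ → ℕ) → Prop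
  | _, .falsum, _, _ => False
  | l, .equal t₁ t₂, a, _ => (BoundedFormula.equal t₁ t₂).Realize (fun e => e.elim) (env l a)
  | l, .rel r ts, a, _ => (BoundedFormula.rel r ts).Realize (fun e => e.elim) (env l a)
  | _, .imp φ ψ, a, b => boundedTruth φ a b → boundedTruth ψ a b
  | _, .all φ, a, b => ∀ x, Nat.pair a x < b 0 →
      boundedTruth φ (Nat.pair a x) fun q => b (q + 1)

/-- Quantifier depth. -/
def quantDepth : ∀ {l : ℕ}, LPA.BoundedFormula Empty l → ℕ
  | _, .falsum => 0
  | _, .equal _ _ => 0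
  | _, .rel _ _ => 0
  | _, .imp φ ψ => max (quantDepth φ) (quantDepth ψ)
  | _, .all φ => quantDepth φ + 1

theorem boundedTruth_congr {l : ℕ} (φ : LPA.BoundedFormula Empty l) (a : ℕ) (b b' : ℕ → ℕ)
    (h : ∀ m < quantDepth φ, b m = b' m) : boundedTruth φ a b ↔ boundedTruth φ a b' := by
  induction φ generalizing a b b' with
  | falsum => rfl
  | equal t₁ t₂ => rfl
  | rel r ts => rfl
  | imp φ ψ ih₁ ih₂ =>
    exact imp_congr (ih₁ a b b' fun m hm => h m (lt_max_of_lt_left hm))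
      (ih₂ a b b' fun m hm => h m (lt_max_of_lt_right hm))
  | all φ ih =>
    simp only [boundedTruth]
    rw [h 0 (Nat.succ_pos _)]
    exact forall_congr' fun x => imp_congr_right fun _ =>
      ih _ _ _ fun m hm => h (m + 1) (Nat.succ_lt_succ hm)

namespace Scale

variable {S : Scale}

theorem eventually_env_snoc {l : ℕ} {v : Fin l → S.Cut} {a : ℕ → ℕ}
    (ha : ∀ᶠ n in S.U, (fun k => rep (v k) n) = env l (a n)) {x : S.Cut} {y : ℕ → ℕ}
    (hy : ∀ᶠ n in S.U, rep x n = y n) :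
    ∀ᶠ n in S.U, (fun k => rep (Fin.snoc (α := fun _ => S.Cut) v x k) n) =
      env (l + 1) (Nat.pair (a n) (y n)) := by
  filter_upwards [ha, hy] with n h1 h2
  rw [rep_snoc, env_pair, h1, h2]

theorem exists_code : ∀ {l : ℕ} (v : Fin l → S.Cut),
    ∃ a, S.InCut a ∧ ∀ᶠ n in S.U, (fun k => rep (v k) n) = env l (a n)
  | 0, _ => ⟨_, inCut_zero, Filter.Eventually.of_forall fun _ => Subsingleton.elim _ _⟩
  | l + 1, v => by
    obtain ⟨a, ha, hav⟩ := exists_code (Fin.init v)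
    refine ⟨_, ha.pair (inCut_rep (v (Fin.last l))), ?_⟩
    have := eventually_env_snoc hav (x := v (Fin.last l))
      (Filter.Eventually.of_forall fun _ => rfl)
    rwa [Fin.snoc_init_self] at this

theorem realize_iff_boundedTruth
    (hI : ∀ {l : ℕ} (φ : LPA.BoundedFormula Empty l), Indisc S.U S.h (boundedTruth φ))
    {l : ℕ} (φ : LPA.BoundedFormula Empty l) (v : Fin l → S.Cut) (a : ℕ → ℕ)
    (hav : ∀ᶠ n in S.U, (fun k => rep (v k) n) = env l (a n)) (i : ℕ)
    (hai : ∀ᶠ n in S.U, a n < S.h i n) (j : ℕ → ℕ) (hj : StrictMono j) (hij : i < j 0) :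
    φ.Realize (fun e => e.elim) v ↔
      ∀ᶠ n in S.U, boundedTruth φ (a n) fun q => S.h (j q) n := by
  induction φ generalizing a i j with
  | falsum => exact (Filter.eventually_const (f := (S.U : Filter ℕ))).symm
  | equal t₁ t₂ =>
    rw [realize_equal_iff]
    exact Filter.eventually_congr (hav.mono fun n hn => by rw [hn]; rfl)
  | rel r ts =>
    rw [realize_rel_iff]
    exact Filter.eventually_congr (hav.mono fun n hn => by rw [hn]; rfl)
  | imp φ ψ ih₁ ih₂ =>
    simp only [boundedTruth, BoundedFormula.realize_imp, Ultrafilter.eventually_imp,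
      ih₁ v a hav i hai j hj hij, ih₂ v a hav i hai j hj hij]
  | all φ ih =>
    have hjs : StrictMono fun q => j (q + 1) := fun p q hpq => hj (Nat.succ_lt_succ hpq)
    simp only [BoundedFormula.realize_all]
    constructor
    · intro h
      by_contra hcon
      rw [← Ultrafilter.eventually_not] at hcon
      simp only [boundedTruth] at hcon
      push Not at hcon
      obtain ⟨x, hx⟩ := Filter.Eventually.choice hcon
      have hxS : S.InCut x := ⟨j 0, hx.mono fun n hn => (Nat.right_le_pair _ _).trans_lt hn.1⟩
      have h1 := (ih _ _ (eventually_env_snoc hav (rep_ofFun x hxS)) (j 0)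
        (hx.mono fun n hn => hn.1) _ hjs (hj (Nat.lt_succ_self 0))).1 (h (ofFun x hxS))
      obtain ⟨n, h2, h3⟩ := (h1.and hx).exists
      exact h3.2 h2
    · intro h x
      obtain ⟨k, hk⟩ := InCut.pair ⟨i, hai⟩ (inCut_rep x)
      have hs : ∀ q, StrictMono fun m : ℕ => q + m := fun q => strictMono_id.const_add q
      have h1 : ∀ᶠ n in S.U, boundedTruth φ.all (a n) fun m => S.h (max i k + 1 + m) n := by
        filter_upwards [h, hai, hI φ.all i j _ hj (hs (max i k + 1)) hij (by omega)]
          with n h1 h2 h3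
        exact (h3 _ h2).1 h1
      have hk' : ∀ᶠ n in S.U, Nat.pair (a n) (rep x n) < S.h (max i k + 1) n := by
        filter_upwards [hk, S.mono_le (show k ≤ max i k + 1 by omega)] with n h1 h2
          using h1.trans_le h2
      refine (ih _ _ (eventually_env_snoc hav (Filter.Eventually.of_forall fun _ => rfl))
        (max i k + 1) hk' (fun m => max i k + 1 + (m + 1))
        (fun p q hpq => hs _ (Nat.succ_lt_succ hpq)) (by omega)).2 ?_
      filter_upwards [h1, hk'] with n h2 h3
      exact h2 _ h3

theorem induction_scheme
    (hI : ∀ {l : ℕ} (φ : LPA.BoundedFormula Empty l), Indisc S.U S.h (boundedTruth φ))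
    {l : ℕ} (φ : LPA.BoundedFormula Empty (l + 1)) (v : Fin l → S.Cut)
    (h0 : φ.Realize (fun e => e.elim) (Fin.snoc v pzero))
    (hs : ∀ x : S.Cut, φ.Realize (fun e => e.elim) (Fin.snoc v x) →
      φ.Realize (fun e => e.elim) (Fin.snoc v (padd x pone))) (x : S.Cut) :
    φ.Realize (fun e => e.elim) (Fin.snoc v x) := by
  obtain ⟨a, ha, hav⟩ := exists_code v
  obtain ⟨i, hi⟩ := ha.pair (inCut_rep x)
  let p : ℕ → ℕ → Prop := fun n y =>
    boundedTruth φ (Nat.pair (a n) y) fun q => S.h (i + 1 + q) n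
  have key : ∀ (y : ℕ → ℕ) (hy : S.InCut y), (∀ᶠ n in S.U, y n ≤ rep x n) →
      (φ.Realize (fun e => e.elim) (Fin.snoc v (ofFun y hy)) ↔ ∀ᶠ n in S.U, p n (y n)) := by
    intro y hy hyx
    refine realize_iff_boundedTruth hI φ _ _ (eventually_env_snoc hav (rep_ofFun y hy)) i ?_
      (fun q => i + 1 + q) (strictMono_id.const_add _) (by omega)
    filter_upwards [hi, hyx] with n h1 h2
    refine lt_of_le_of_lt ?_ h1
    rcases h2.eq_or_lt with h | h
    · rw [h]
    · exact (Nat.pair_lt_pair_right _ h).le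
  by_contra hcon
  have hx : ∀ᶠ n in S.U, ∃ y, y ≤ rep x n ∧ ¬ p n y ∧ ∀ z < y, p n z := by
    rw [← ofFun_rep x, key _ (inCut_rep x) (Filter.Eventually.of_forall fun _ => le_rfl),
      ← Ultrafilter.eventually_not] at hcon
    filter_upwards [hcon] with n hn
    classical
    have hex := Exists.intro (p := fun y => ¬ p n y) _ hn
    exact ⟨Nat.find hex, Nat.find_min' hex hn, Nat.find_spec hex,
      fun z hz => not_not.1 (Nat.find_min hex hz)⟩
  obtain ⟨y, hy⟩ := Filter.Eventually.choice hx
  have hyS : S.InCut y := (inCut_rep x).of_le (hy.mono fun n hn => hn.1)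
  have hzS : S.InCut fun n => y n - 1 :=
    hyS.of_le (Filter.Eventually.of_forall fun n => Nat.sub_le _ _)
  have hp0 : ∀ᶠ n in S.U, p n 0 :=
    (key _ inCut_zero (Filter.Eventually.of_forall fun _ => Nat.zero_le _)).1 h0
  have hpos : ∀ᶠ n in S.U, 0 < y n := by
    filter_upwards [hp0, hy] with n h1 h2
    refine Nat.pos_of_ne_zero fun h => h2.2.1 ?_
    rwa [h]
  have hz := hs _ ((key _ hzS (hy.mono fun n hn => (Nat.sub_le _ _).trans hn.1)).2 (by
    filter_upwards [hy, hpos] with n h1 h2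
    exact h1.2.2 _ (by omega)))
  have heq : padd (ofFun _ hzS) pone = ofFun y hyS := by
    rw [pone_eq, padd_ofFun, ofFun_eq_ofFun]
    filter_upwards [hpos] with n hn
    omega
  rw [heq, key y hyS (hy.mono fun n hn => hn.1)] at hz
  obtain ⟨n, h1, h2⟩ := (hz.and hy).exists
  exact h2.2.1 h1

/-- A cut generated by a sequence of diagonal indiscernibles is a model of PA. -/
theorem isPAModel
    (hI : ∀ {l : ℕ} (φ : LPA.BoundedFormula Empty l), Indisc S.U S.h (boundedTruth φ)) :
    IsPAModel S.Cut := by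
  have heq : ∀ {s t : ℕ → ℕ} {hs : S.InCut s} {ht : S.InCut t}, (∀ n, s n = t n) →
      ofFun s hs = ofFun t ht := fun h => ofFun_eq_ofFun.2 (Filter.Eventually.of_forall h)
  refine ⟨?_, ?_, ?_, ?_, ?_, ?_, ?_, ?_, ?_, ?_, ?_, ?_, ?_, ?_, ?_, ?_, ?_,
    fun _ => induction_scheme hI⟩ <;>
    simp only [forall_ofFun, pzero_eq, pone_eq, padd_ofFun, pmul_ofFun, pexp_ofFun, plt_ofFun]
  · exact fun a _ => heq fun n => by ring
  · exact fun a _ b _ => heq fun n => by ring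
  · exact fun a _ b _ c _ => heq fun n => by ring
  · exact fun a _ => heq fun n => by ring
  · exact fun a _ => heq fun n => by ring
  · exact fun a _ b _ => heq fun n => by ring
  · exact fun a _ b _ c _ => heq fun n => by ring
  · exact fun a _ b _ c _ => heq fun n => by ring
  · intro a _ h
    obtain ⟨n, hn⟩ := h.exists
    exact lt_irrefl _ hn
  · intro a _ b _ c _ h1 h2
    filter_upwards [h1, h2] with n h1 h2 using h1.trans h2
  · intro a _ b _
    simp only [ofFun_eq_ofFun, ← Ultrafilter.eventually_or]
    exact Filter.Eventually.of_forall fun n => lt_trichotomy _ _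
  · intro a _ b _ c _ h
    filter_upwards [h] with n h using by omega
  · intro a _
    simp only [ofFun_eq_ofFun, ← Ultrafilter.eventually_or]
    exact Filter.Eventually.of_forall fun n => Nat.eq_zero_or_pos _
  · exact fun a _ => Filter.Eventually.of_forall fun n => lt_add_one _
  · intro a _ b _ h
    simp only [ofFun_eq_ofFun, ← Ultrafilter.eventually_or]
    filter_upwards [h] with n h using by omega
  · exact fun a _ => heq fun n => pow_zero _
  · exact fun a _ b _ => heq fun n => pow_succ _ _

end Scale

/-- If the diagonal Ramsey function fails to dominate `f`, some scale of diagonal indiscernibles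
generates a cut that contains a point `c` but lies below `f c`. -/
theorem exists_scale {f c : ℕ → ℕ} (hc : ∀ n, Dfun n n (n + c n) ≤ f (c n)) :
    ∃ S : Scale, (∀ {l : ℕ} (φ : LPA.BoundedFormula Empty l), Indisc S.U S.h (boundedTruth φ)) ∧
      S.InCut c ∧ ∀ i, ∀ᶠ n in S.U, S.h i n < f (c n) := by
  have htend : Filter.Tendsto c Filter.atTop Filter.atTop := by
    refine Filter.tendsto_atTop.2 fun B => ?_
    filter_upwards [Filter.eventually_ge_atTop ((Finset.range B).sup f)] with n hn
    by_contra! hlt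
    have h1 := (dfun_spec n n (n + c n)).1
    have h2 := Finset.le_sup (f := f) (Finset.mem_range.2 hlt)
    have h3 := hc n
    omega
  let R : Fin 3 ⊕ (Σ l, LPA.BoundedFormula Empty l) → ℕ → (ℕ → ℕ) → Prop :=
    Sum.elim ![fun a b => b 1 = b 0 + a, fun a b => b 1 / b 0 = a,
      fun a b => Nat.log (b 0) (b 1) = a] fun φ => boundedTruth φ.2
  obtain ⟨h, hI, hmono, hK, hch⟩ := exists_indisc R (Sum.elim (fun _ => 2) fun φ => quantDepth φ.2)
    (by
      rintro (e | φ) a b b' hb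
      · have h0 := hb 0 (by simp)
        have h1 := hb 1 (by simp)
        fin_cases e <;> simp [R, h0, h1]
      · exact boundedTruth_congr φ.2 a b b' hb)
    _ c htend fun n => (dfun_spec n n (n + c n)).2
  have h2 : ∀ i, ∀ᶠ n in Filter.hyperfilter ℕ, 2 ≤ h i n := fun i => by
    have hle : ∀ᶠ n in Filter.hyperfilter ℕ, h 0 n ≤ h i n := by
      rcases Nat.eq_zero_or_pos i with rfl | hi
      · exact Filter.Eventually.of_forall fun _ => le_rfl
      · exact (hmono 0 i hi).mono fun _ => le_of_lt
    filter_upwards [hch, hle,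
      (htend.eventually_ge_atTop 4).filter_mono Nat.hyperfilter_le_atTop] with n h1 h2 h3
    omega
  refine ⟨⟨Filter.hyperfilter ℕ, h, hmono, h2 0, fun i => ⟨i + 2, ?_⟩⟩,
    fun φ => hI (Sum.inr ⟨_, φ⟩), ?_, ?_⟩
  · filter_upwards [(hI (Sum.inl 0)).pow_le hmono (hI (Sum.inl 1)) (hI (Sum.inl 2))
      ((h2 i).mono fun n hn => by omega) (lt_add_one i) (lt_add_one (i + 1)),
      hmono i (i + 1) (lt_add_one i)] with n h3 h4
    exact (Nat.pow_le_pow_left h4.le _).trans h3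
  · refine ((Scale.InCut.mul (s := fun _ => 2) (t := h 0) ⟨1, ?_⟩ ⟨1, hmono 0 1 one_pos⟩)).of_le hch
    filter_upwards [h2 0, hmono 0 1 one_pos] with n h3 h4
    exact h3.trans_lt h4
  · exact fun i => (hK i).mono fun n hn => hn.trans_le (hc n)

theorem exists_dfun_bound (f : ℕ → ℕ)
    (θ : LPA.BoundedFormula Empty 3) (hθ : Delta0 θ)
    (hgraph : ∀ x y : ℕ, f x = y ↔ ∃ z : ℕ, θ.Realize (fun e => e.elim) ![x, y, z])
    (hprov : PAproves θ.ex.ex.all) :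
    ∃ n₀ : ℕ, ∀ x : ℕ, f x < Dfun n₀ n₀ (n₀ + x) := by
  by_contra! hcon
  choose c hc using hcon
  obtain ⟨S, hI, hcS, hf⟩ := exists_scale hc
  have hM := hprov S.Cut inferInstance (Scale.isPAModel hI)
  simp only [Sentence.Realize, Formula.Realize, BoundedFormula.realize_all,
    BoundedFormula.realize_ex] at hM
  obtain ⟨y, z, hyz⟩ := hM (Scale.ofFun c hcS)
  rw [Subsingleton.elim (default : Empty → S.Cut) (fun e => e.elim),
    Scale.realize_delta0_iff hθ] at hyz
  obtain ⟨i, hi⟩ := Scale.inCut_rep y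
  obtain ⟨n, h1, h2, h3, h4⟩ := (hyz.and (hi.and ((hf i).and (Scale.rep_ofFun c hcS)))).exists
  simp only [Scale.rep_snoc, h4] at h1
  have hv : (Fin.snoc (Fin.snoc (Fin.snoc (fun k => Scale.rep ((default : Fin 0 → S.Cut) k) n)
      (c n)) (Scale.rep y n)) (Scale.rep z n) : Fin 3 → ℕ) =
      ![c n, Scale.rep y n, Scale.rep z n] := by
    funext k
    fin_cases k <;> rfl
  rw [hv] at h1
  have := (hgraph _ _).2 ⟨_, h1⟩
  omega

/-- the diagonal Ramsey function dominates every provably total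
computable function of PA: if `f` has a `Σ₁`-definable graph `∃z θ(x,y,z)`
(`θ ∈ Δ₀`) whose totality `∀x∃y∃z θ` is provable in PA, then
`f(x) < D(n₀, n₀, n₀ + x)` for some `n₀` and all `x`; hence `n ↦ D(n,n,2n)`
eventually dominates `f`. -/
theorem diagonal_ramsey_dominates (f : ℕ → ℕ)
    (θ : LPA.BoundedFormula Empty 3) (hθ : Delta0 θ)
    (hgraph : ∀ x y : ℕ, f x = y ↔ ∃ z : ℕ, θ.Realize (fun e => e.elim) ![x, y, z])
    (hprov : PAproves θ.ex.ex.all) :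
    ∃ n₀ : ℕ, (∀ x : ℕ, f x < Dfun n₀ n₀ (n₀ + x)) ∧
      ∃ N : ℕ, ∀ n : ℕ, N ≤ n → f n < Dfun n n (2 * n) := by
  obtain ⟨n₀, h⟩ := exists_dfun_bound f θ hθ hgraph hprov
  refine ⟨n₀, h, n₀, fun n hn => (h n).trans_le ?_⟩
  have := dfun_mono (k := 2 * n) hn (by omega)
  rwa [show 2 * n - (n - n₀) = n₀ + n by omega] at this
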